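/- arXiv:2411.01214 — 5 statements merged into one kernel-verified Lean document; each statement's English description precedes it below -/
import Mathlib

section
/- Let D ≥ 1, let s > 0 be a speed constraint, and let t_p < t_k < t_m be real timestamps. Let x'_p, x_m ∈ ℝ^D with d(x'_p, x_m) ≤ s·(t_m − t_p). Define α = (t_k − t_p)/(t_m − t_p) and the interpolated point x'_k = x'_p + α·(x_m − x'_p). Then d(x'_k, x_m) ≤ s·(t_m − t_k), i.e., the interpolated point also satisfies the speed constraint with the succeeding anchor point x_m. -/
/-- The interpolated point `x'_k = x'_p + α·(x_m − x'_p)` with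
`α = (t_k − t_p)/(t_m − t_p)` also satisfies the speed constraint with the
succeeding anchor point `x_m`. -/
theorem interpolation_satisfies_speed_with_succeeding
    (D : ℕ) (hD : 1 ≤ D) (s : ℝ) (hs : 0 < s)
    (tp tk tm : ℝ) (htpk : tp < tk) (htkm : tk < tm)
    (xp xm : EuclideanSpace ℝ (Fin D))
    (hpm : dist xp xm ≤ s * (tm - tp)) :
    dist (xp + ((tk - tp) / (tm - tp)) • (xm - xp)) xm ≤ s * (tm - tk) := by
  have hT : 0 < tm - tp := by linarith
  have hα : 1 - (tk - tp) / (tm - tp) = (tm - tk) / (tm - tp) := by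
    field_simp
    ring
  have hvec : xp + ((tk - tp) / (tm - tp)) • (xm - xp) - xm
      = ((tm - tk) / (tm - tp)) • (xp - xm) := by
    rw [← hα]
    module
  have hβ : 0 ≤ (tm - tk) / (tm - tp) := div_nonneg (by linarith) hT.le
  rw [dist_eq_norm, hvec, norm_smul, Real.norm_of_nonneg hβ, ← dist_eq_norm]
  calc (tm - tk) / (tm - tp) * dist xp xm
      ≤ (tm - tk) / (tm - tp) * (s * (tm - tp)) := by gcongr
    _ = s * (tm - tk) := by field_simp
end

section
/- Let D ≥ 1, let s > 0 be a speed constraint, let x_1, …, x_n ∈ ℝ^D be a time series with strictly increasing timestamps t_1 < … < t_n, and let S ⊆ {1, …, n} be a nonempty index set such that every pair of points of x indexed by S mutually satisfies the speed constraint (for all i, j ∈ S with i < j, d(x_i, x_j) ≤ s·(t_j − t_i)). Then there exists a repair x'_1, …, x'_n ∈ ℝ^D such that x'_i = x_i for every i ∈ S and the repaired series satisfies the speed constraint for all pairs: d(x'_i, x'_j) ≤ s·(t_j − t_i) for all 1 ≤ i < j ≤ n. (Such a repair is obtained by linearly interpolating each index strictly between two consecutive indices of S between their values, and by assigning to indices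 before the first index of S, resp. after the last index of S, the value of that nearest index of S.) -/
/-- A map that is `s`-Lipschitz from finitely many times into a real normed space can be
extended to one further time `p`. -/
theorem exists_forall_dist_le_mul_abs_sub {ι E : Type*} [NormedAddCommGroup E] [NormedSpace ℝ E]
    {s : ℝ} (hs : 0 ≤ s) (S : Finset ι) (x : ι → E) (t : ι → ℝ)
    (h : ∀ i ∈ S, ∀ j ∈ S, dist (x i) (x j) ≤ s * |t i - t j|) (p : ℝ) :
    ∃ y : E, ∀ i ∈ S, dist (x i) y ≤ s * |t i - p| := by
  -- Through a time `c` between `t i` and `p`, the bound for `i` follows from that for `c`.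
  have through : ∀ y : E, ∀ c ∈ S, dist (x c) y ≤ s * |t c - p| → ∀ i ∈ S,
      |t i - t c| + |t c - p| = |t i - p| → dist (x i) y ≤ s * |t i - p| := by
    intro y c hc hcy i hi habs
    calc dist (x i) y ≤ dist (x i) (x c) + dist (x c) y := dist_triangle _ _ _
      _ ≤ s * |t i - t c| + s * |t c - p| := add_le_add (h i hi c hc) hcy
      _ = s * |t i - p| := by rw [← mul_add, habs]
  have below : ∀ y : E, ∀ a ∈ S, dist (x a) y ≤ s * |t a - p| → t a ≤ p →
      ∀ i ∈ S, t i ≤ t a → dist (x i) y ≤ s * |t i - p| := by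
    intro y a ha hay hap i hi hia
    refine through y a ha hay i hi ?_
    rw [abs_of_nonpos (by linarith), abs_of_nonpos (by linarith), abs_of_nonpos (by linarith)]
    ring
  have above : ∀ y : E, ∀ b ∈ S, dist (x b) y ≤ s * |t b - p| → p ≤ t b →
      ∀ i ∈ S, t b ≤ t i → dist (x i) y ≤ s * |t i - p| := by
    intro y b hb hby hpb i hi hbi
    refine through y b hb hby i hi ?_
    rw [abs_of_nonneg (by linarith), abs_of_nonneg (by linarith), abs_of_nonneg (by linarith)]
    ring
  have self : ∀ c, dist (x c) (x c) ≤ s * |t c - p| := fun c => by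
    rw [dist_self]; positivity
  rcases (S.filter (t · ≤ p)).eq_empty_or_nonempty with hA | hA
  · rw [Finset.filter_eq_empty_iff] at hA
    rcases S.eq_empty_or_nonempty with rfl | hS
    · exact ⟨0, by simp⟩
    obtain ⟨b, hb, hbmin⟩ := S.exists_min_image t hS
    exact ⟨x b, fun i hi =>
      above _ b hb (self b) (le_of_not_ge (hA hb)) i hi (hbmin i hi)⟩
  obtain ⟨a, ha, hamax⟩ := Finset.exists_max_image _ t hA
  simp only [Finset.mem_filter, and_imp] at ha hamax
  obtain ⟨ha, hap⟩ := ha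
  rcases (S.filter (p ≤ t ·)).eq_empty_or_nonempty with hB | hB
  · rw [Finset.filter_eq_empty_iff] at hB
    exact ⟨x a, fun i hi =>
      below _ a ha (self a) hap i hi (hamax i hi (le_of_not_ge (hB hi)))⟩
  obtain ⟨b, hb, hbmin⟩ := Finset.exists_min_image _ t hB
  simp only [Finset.mem_filter, and_imp] at hb hbmin
  obtain ⟨hb, hpb⟩ := hb
  obtain ⟨θ, ⟨hθ0, hθ1⟩, hθ⟩ : ∃ θ ∈ Set.Icc (0 : ℝ) 1, AffineMap.lineMap (t a) (t b) θ = p := by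
    have hp : p ∈ segment ℝ (t a) (t b) := by
      rw [segment_eq_Icc (hap.trans hpb)]; exact ⟨hap, hpb⟩
    rwa [segment_eq_image_lineMap] at hp
  have hθa : |t a - p| = θ * |t a - t b| := by
    rw [← Real.dist_eq, ← hθ, dist_left_lineMap, Real.norm_of_nonneg hθ0, Real.dist_eq]
  have hθb : |t b - p| = (1 - θ) * |t a - t b| := by
    rw [← Real.dist_eq, ← hθ, dist_right_lineMap, Real.norm_of_nonneg (sub_nonneg.2 hθ1),
      Real.dist_eq]
  have hab := h a ha b hb
  refine ⟨AffineMap.lineMap (x a) (x b) θ, fun i hi => ?_⟩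
  rcases le_total (t i) p with hip | hpi
  · refine below _ a ha ?_ hap i hi (hamax i hi hip)
    rw [dist_left_lineMap, Real.norm_of_nonneg hθ0, hθa, mul_left_comm]
    exact mul_le_mul_of_nonneg_left hab hθ0
  · refine above _ b hb ?_ hpb i hi (hbmin i hi hpi)
    rw [dist_right_lineMap, Real.norm_of_nonneg (sub_nonneg.2 hθ1), hθb, mul_left_comm]
    exact mul_le_mul_of_nonneg_left hab (sub_nonneg.2 hθ1)

/-- A map that is `s`-Lipschitz on a finite set of times can be modified off that set so as to be
`s`-Lipschitz on any larger finite set of times. -/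
theorem exists_extension_forall_dist_le_mul_abs_sub {ι E : Type*} [DecidableEq ι]
    [NormedAddCommGroup E] [NormedSpace ℝ E] {s : ℝ} (hs : 0 ≤ s) (S : Finset ι) (x : ι → E)
    (t : ι → ℝ) (h : ∀ i ∈ S, ∀ j ∈ S, dist (x i) (x j) ≤ s * |t i - t j|) (T : Finset ι) :
    ∃ x' : ι → E, (∀ i ∈ S, x' i = x i) ∧
      ∀ i ∈ S ∪ T, ∀ j ∈ S ∪ T, dist (x' i) (x' j) ≤ s * |t i - t j| := by
  induction T using Finset.induction_on with
  | empty => exact ⟨x, fun _ _ => rfl, by simpa using h⟩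
  | insert k T _ ih =>
    obtain ⟨x', hx', hT⟩ := ih
    rw [Finset.union_insert]
    by_cases hk : k ∈ S ∪ T
    · rw [Finset.insert_eq_of_mem hk]
      exact ⟨x', hx', hT⟩
    obtain ⟨y, hy⟩ := exists_forall_dist_le_mul_abs_sub hs (S ∪ T) x' t hT (t k)
    have hne : ∀ i ∈ S ∪ T, i ≠ k := fun i hi hik => hk (hik ▸ hi)
    refine ⟨Function.update x' k y, fun i hi => ?_, fun i hi j hj => ?_⟩
    · rw [Function.update_of_ne (hne i (Finset.mem_union_left T hi)), hx' i hi]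
    · rcases Finset.mem_insert.1 hi with rfl | hiT <;> rcases Finset.mem_insert.1 hj with rfl | hjT
      · simp
      · rw [Function.update_self, Function.update_of_ne (hne j hjT), dist_comm, abs_sub_comm]
        exact hy j hjT
      · rw [Function.update_self, Function.update_of_ne (hne i hiT)]
        exact hy i hiT
      · rw [Function.update_of_ne (hne i hiT), Function.update_of_ne (hne j hjT)]
        exact hT i hiT j hjT

/-- Given a nonempty set `S` of indices whose points mutually satisfy the speed
constraint, there exists a repair which keeps all points indexed by `S`
unchanged and satisfies the speed constraint for all pairs. -/
theorem exists_repair_fixing_compatible_subset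
    (D : ℕ) (hD : 1 ≤ D) (s : ℝ) (hs : 0 < s)
    (n : ℕ) (x : Fin n → EuclideanSpace ℝ (Fin D)) (t : Fin n → ℝ)
    (ht : StrictMono t)
    (S : Finset (Fin n)) (hS : S.Nonempty)
    (hcomp : ∀ i ∈ S, ∀ j ∈ S, i < j → dist (x i) (x j) ≤ s * (t j - t i)) :
    ∃ x' : Fin n → EuclideanSpace ℝ (Fin D),
      (∀ i ∈ S, x' i = x i) ∧
      (∀ i j : Fin n, i < j → dist (x' i) (x' j) ≤ s * (t j - t i)) := by
  have hsymm : ∀ i ∈ S, ∀ j ∈ S, dist (x i) (x j) ≤ s * |t i - t j| := by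
    intro i hi j hj
    rcases lt_trichotomy i j with hij | rfl | hij
    · rw [abs_sub_comm, abs_of_pos (sub_pos.2 (ht hij))]
      exact hcomp i hi j hj hij
    · simp
    · rw [dist_comm, abs_of_pos (sub_pos.2 (ht hij))]
      exact hcomp j hj i hi hij
  obtain ⟨x', hx', h⟩ :=
    exists_extension_forall_dist_le_mul_abs_sub hs.le S x t hsymm Finset.univ
  refine ⟨x', hx', fun i j hij => ?_⟩
  have hle := h i (by simp) j (by simp)
  rwa [abs_sub_comm, abs_of_pos (sub_pos.2 (ht hij))] at hle
end

section
/- Let D ≥ 1, let s > 0 be a speed constraint, and let x_1, …, x_n ∈ ℝ^D be a time series with strictly increasing timestamps t_1 < … < t_n. Let L be the maximum cardinality of a subset S ⊆ {1, …, n} such that every pair of points of x indexed by S mutually satisfies the speed constraint. Then every repair x'_1, …, x'_n that satisfies the speed constraint for all pairs (d(x'_i, x'_j) ≤ s·(t_j − t_i) for all i < j) must modify at least n − L points; that is, the number of indices i with x'_i ≠ x_i is at least n − L. -/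
/-- Lower bound for the repair number: if `L` is the maximum cardinality of a
set of indices whose points mutually satisfy the speed constraint, then any
repair satisfying the speed constraint must modify at least `n − L` points. -/
theorem repair_number_lower_bound
    (D : ℕ) (hD : 1 ≤ D) (s : ℝ) (hs : 0 < s)
    (n : ℕ) (x : Fin n → EuclideanSpace ℝ (Fin D)) (t : Fin n → ℝ)
    (ht : StrictMono t) (L : ℕ)
    (hL : IsGreatest {m : ℕ | ∃ S : Finset (Fin n), S.card = m ∧
            ∀ i ∈ S, ∀ j ∈ S, i < j → dist (x i) (x j) ≤ s * (t j - t i)} L)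
    (x' : Fin n → EuclideanSpace ℝ (Fin D))
    (hx' : ∀ i j : Fin n, i < j → dist (x' i) (x' j) ≤ s * (t j - t i)) :
    n - L ≤ {i : Fin n | x' i ≠ x i}.ncard := by
  classical
  have unchanged_card_le : (Finset.univ.filter fun i => x' i = x i).card ≤ L := by
    refine hL.2 ⟨_, rfl, fun i hi j hj hij => ?_⟩
    rw [← (Finset.mem_filter.1 hi).2, ← (Finset.mem_filter.1 hj).2]
    exact hx' i j hij
  have card_split := Finset.card_filter_add_card_filter_not
    (s := (Finset.univ : Finset (Fin n))) (fun i => x' i = x i)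
  have ncard_eq : {i : Fin n | x' i ≠ x i}.ncard =
      (Finset.univ.filter fun i => ¬ x' i = x i).card := by
    rw [← Set.ncard_coe_finset]
    congr 1
    ext i
    simp
  rw [Finset.card_univ, Fintype.card_fin] at card_split
  omega
end

section
/- Let D ≥ 1, let s > 0 be a speed constraint, and let x_1, …, x_n ∈ ℝ^D (n ≥ 1) be a time series with strictly increasing timestamps t_1 < … < t_n. Let L be the maximum cardinality of a subset S ⊆ {1, …, n} such that every pair of points of x indexed by S mutually satisfies the speed constraint (L ≥ 1 since any singleton qualifies). Then the minimum, over all repairs x' that satisfy the speed constraint for all pairs, of the repair number Δ(x', x) equals n − L. In particular, a minimum-fix repair changes exactly the points outside a longest mutually compatible subsequence of x. -/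
open Finset

section Extension

variable {ι E : Type*} [LinearOrder ι] [NormedAddCommGroup E] [NormedSpace ℝ E]

/-- The points of `y` indexed by `S` pairwise satisfy the speed constraint `s`. -/
def SpeedCompatibleOn (s : ℝ) (t : ι → ℝ) (y : ι → E) (S : Finset ι) : Prop :=
  ∀ i ∈ S, ∀ j ∈ S, i < j → dist (y i) (y j) ≤ s * (t j - t i)

/-- The point dividing a segment in the ratio of the elapsed times satisfies the speed constraint
with both endpoints as soon as the endpoints do. -/
lemma exists_between_of_dist_le {s a b c : ℝ} (hab : a < b) (hbc : b < c) {u w : E}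
    (h : dist u w ≤ s * (c - a)) :
    ∃ v : E, dist u v ≤ s * (b - a) ∧ dist v w ≤ s * (c - b) := by
  have hac : 0 < c - a := by linarith
  refine ⟨AffineMap.lineMap u w ((b - a) / (c - a)), ?_, ?_⟩
  · rw [dist_left_lineMap, Real.norm_of_nonneg (div_nonneg (by linarith) hac.le)]
    calc (b - a) / (c - a) * dist u w ≤ (b - a) / (c - a) * (s * (c - a)) :=
          mul_le_mul_of_nonneg_left h (div_nonneg (by linarith) hac.le)
      _ = s * (b - a) := by field_simp
  · have h1 : 1 - (b - a) / (c - a) = (c - b) / (c - a) := by field_simp; ring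
    rw [dist_lineMap_right, h1, Real.norm_of_nonneg (div_nonneg (by linarith) hac.le)]
    calc (c - b) / (c - a) * dist u w ≤ (c - b) / (c - a) * (s * (c - a)) :=
          mul_le_mul_of_nonneg_left h (div_nonneg (by linarith) hac.le)
      _ = s * (c - b) := by field_simp

/-- One more point can be inserted at any time stamp. -/
lemma SpeedCompatibleOn.exists_point {s : ℝ} {t : ι → ℝ} (hs : 0 ≤ s) (ht : StrictMono t)
    {y : ι → E} {T : Finset ι} (hT : SpeedCompatibleOn s t y T) (i : ι) :
    ∃ v : E, (∀ j ∈ T, j < i → dist (y j) v ≤ s * (t i - t j)) ∧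
      ∀ j ∈ T, i < j → dist v (y j) ≤ s * (t j - t i) := by
  -- Constraints propagate from the nearest neighbours of `i` to all other points.
  have left : ∀ p ∈ T, (∀ j ∈ T, j < i → j ≤ p) → ∀ v, dist (y p) v ≤ s * (t i - t p) →
      ∀ j ∈ T, j < i → dist (y j) v ≤ s * (t i - t j) := by
    intro p hp hmax v hv j hj hji
    rcases (hmax j hj hji).eq_or_lt with rfl | hjp
    · exact hv
    · linarith [hT j hj p hp hjp, dist_triangle (y j) (y p) v]
  have right : ∀ q ∈ T, (∀ j ∈ T, i < j → q ≤ j) → ∀ v, dist v (y q) ≤ s * (t q - t i) →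
      ∀ j ∈ T, i < j → dist v (y j) ≤ s * (t j - t i) := by
    intro q hq hmin v hv j hj hij
    rcases (hmin j hj hij).eq_or_lt with rfl | hqj
    · exact hv
    · linarith [hT q hq j hj hqj, dist_triangle v (y q) (y j)]
  rcases (T.filter (· < i)).eq_empty_or_nonempty with hA | hA <;>
    rcases (T.filter (i < ·)).eq_empty_or_nonempty with hB | hB
  · exact ⟨0, fun j hj hji => (filter_eq_empty_iff.1 hA hj hji).elim,
      fun j hj hij => (filter_eq_empty_iff.1 hB hj hij).elim⟩
  · obtain ⟨q, hq, hmin⟩ := exists_min_image _ id hB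
    simp only [mem_filter, id, and_imp] at hq hmin
    refine ⟨y q, fun j hj hji => (filter_eq_empty_iff.1 hA hj hji).elim,
      right q hq.1 hmin _ ?_⟩
    rw [dist_self]
    exact mul_nonneg hs (sub_nonneg.2 (ht hq.2).le)
  · obtain ⟨p, hp, hmax⟩ := exists_max_image _ id hA
    simp only [mem_filter, id, and_imp] at hp hmax
    refine ⟨y p, left p hp.1 hmax _ ?_,
      fun j hj hij => (filter_eq_empty_iff.1 hB hj hij).elim⟩
    rw [dist_self]
    exact mul_nonneg hs (sub_nonneg.2 (ht hp.2).le)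
  · obtain ⟨p, hp, hmax⟩ := exists_max_image _ id hA
    obtain ⟨q, hq, hmin⟩ := exists_min_image _ id hB
    simp only [mem_filter, id, and_imp] at hp hmax hq hmin
    obtain ⟨v, hpv, hvq⟩ := exists_between_of_dist_le (ht hp.2) (ht hq.2)
      (hT p hp.1 q hq.1 (hp.2.trans hq.2))
    exact ⟨v, left p hp.1 hmax v hpv, right q hq.1 hmin v hvq⟩

/-- A partial series satisfying the speed constraint extends to any larger finite index set. -/
lemma SpeedCompatibleOn.exists_extension {s : ℝ} {t : ι → ℝ} (hs : 0 ≤ s) (ht : StrictMono t)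
    {y : ι → E} {S : Finset ι} (hS : SpeedCompatibleOn s t y S) (R : Finset ι) :
    ∃ z : ι → E, (∀ i ∈ S, z i = y i) ∧ SpeedCompatibleOn s t z (S ∪ R) := by
  induction R using Finset.induction_on with
  | empty => exact ⟨y, fun _ _ => rfl, by simpa using hS⟩
  | insert a R _ ih =>
    obtain ⟨z, hz, hc⟩ := ih
    by_cases ha : a ∈ S ∪ R
    · exact ⟨z, hz, by rwa [union_insert, insert_eq_of_mem ha]⟩
    obtain ⟨v, hl, hr⟩ := hc.exists_point hs ht a
    have hne : ∀ j ∈ S ∪ R, j ≠ a := fun j hj h => ha (h ▸ hj)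
    refine ⟨Function.update z a v, fun i hi => ?_, ?_⟩
    · rw [Function.update_of_ne (hne i (mem_union_left _ hi)), hz i hi]
    · rw [union_insert]
      intro i hi j hj hij
      rcases mem_insert.1 hi with rfl | hiT <;> rcases mem_insert.1 hj with rfl | hjT
      · exact absurd hij (lt_irrefl _)
      · simpa [Function.update_of_ne (hne j hjT)] using hr j hjT hij
      · simpa [Function.update_of_ne (hne i hiT)] using hl i hiT hij
      · simpa [Function.update_of_ne (hne i hiT), Function.update_of_ne (hne j hjT)]
          using hc i hiT j hjT hij

end Extension

/-- Minimum-fix characterization: the minimum repair number over all repairs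
satisfying the speed constraint equals `n − L`, where `L` is the maximum
cardinality of a set of indices whose points mutually satisfy the speed
constraint. -/
theorem min_fix_eq_n_sub_longest
    (D : ℕ) (hD : 1 ≤ D) (s : ℝ) (hs : 0 < s)
    (n : ℕ) (hn : 1 ≤ n)
    (x : Fin n → EuclideanSpace ℝ (Fin D)) (t : Fin n → ℝ)
    (ht : StrictMono t) (L : ℕ)
    (hL : IsGreatest {m : ℕ | ∃ S : Finset (Fin n), S.card = m ∧
            ∀ i ∈ S, ∀ j ∈ S, i < j → dist (x i) (x j) ≤ s * (t j - t i)} L) :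
    IsLeast {m : ℕ | ∃ x' : Fin n → EuclideanSpace ℝ (Fin D),
        (∀ i j : Fin n, i < j → dist (x' i) (x' j) ≤ s * (t j - t i)) ∧
        m = {i : Fin n | x' i ≠ x i}.ncard} (n - L) := by
  have hcount : ∀ x' : Fin n → EuclideanSpace ℝ (Fin D),
      #{i | x' i = x i} + {i : Fin n | x' i ≠ x i}.ncard = n := by
    intro x'
    have h := card_filter_add_card_filter_not (s := (univ : Finset (Fin n)))
      (fun i => x' i = x i)
    rw [card_univ, Fintype.card_fin] at h
    rwa [Set.ncard_eq_toFinset_card', Set.toFinset_ofPred]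
  have hlower : ∀ x' : Fin n → EuclideanSpace ℝ (Fin D),
      (∀ i j : Fin n, i < j → dist (x' i) (x' j) ≤ s * (t j - t i)) →
      #{i | x' i = x i} ≤ L := by
    refine fun x' hx' => hL.2 ⟨_, rfl, fun i hi j hj hij => ?_⟩
    rw [← (mem_filter.1 hi).2, ← (mem_filter.1 hj).2]
    exact hx' i j hij
  constructor
  · obtain ⟨S, hcard, hS⟩ := hL.1
    obtain ⟨x', hx', hc⟩ := SpeedCompatibleOn.exists_extension hs.le ht hS univ
    have hc' : ∀ i j : Fin n, i < j → dist (x' i) (x' j) ≤ s * (t j - t i) :=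
      fun i j => hc i (by simp) j (by simp)
    have hsub : #S ≤ #{i | x' i = x i} :=
      card_le_card fun i hi => mem_filter.2 ⟨mem_univ i, hx' i hi⟩
    exact ⟨x', hc', by have := hcount x'; have := hlower x' hc'; omega⟩
  · rintro m ⟨x', hx', rfl⟩
    have := hcount x'
    have := hlower x' hx'
    omega
end

section
/- Let D ≥ 1, let s > 0 be a speed constraint, and let t_p < t_k < t_m be real timestamps. Let x'_p, x_m ∈ ℝ^D with d(x'_p, x_m) ≤ s·(t_m − t_p), and let x'_k = x'_p + ((t_k − t_p)/(t_m − t_p))·(x_m − x'_p) be the interpolated point. Then for any earlier point x'_j ∈ ℝ^D at a timestamp t_j < t_p such that d(x'_j, x'_p) ≤ s·(t_p − t_j), one also has d(x'_j, x'_k) ≤ s·(t_k − t_j); that is, the interpolated repair remains compatible with every previously fixed point that is compatible with x'_p. -/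
/-- The interpolated repair remains compatible with every previously fixed
point that is compatible with `x'_p`. -/
theorem interpolation_compatible_with_previous
    (D : ℕ) (hD : 1 ≤ D) (s : ℝ) (hs : 0 < s)
    (tj tp tk tm : ℝ) (htjp : tj < tp) (htpk : tp < tk) (htkm : tk < tm)
    (xp xm : EuclideanSpace ℝ (Fin D))
    (hpm : dist xp xm ≤ s * (tm - tp))
    (xj : EuclideanSpace ℝ (Fin D))
    (hjp : dist xj xp ≤ s * (tp - tj)) :
    dist xj (xp + ((tk - tp) / (tm - tp)) • (xm - xp)) ≤ s * (tk - tj) := by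
  have hm : 0 < tm - tp := by linarith
  have hr : 0 ≤ (tk - tp) / (tm - tp) := div_nonneg (by linarith) hm.le
  have hpk : dist xp (xp + ((tk - tp) / (tm - tp)) • (xm - xp)) ≤ s * (tk - tp) :=
    calc dist xp (xp + ((tk - tp) / (tm - tp)) • (xm - xp))
        = (tk - tp) / (tm - tp) * dist xp xm := by
          rw [dist_self_add_right, norm_smul, Real.norm_of_nonneg hr, dist_comm, dist_eq_norm]
      _ ≤ (tk - tp) / (tm - tp) * (s * (tm - tp)) := by gcongr
      _ = s * (tk - tp) := by field_simp
  linarith [dist_triangle xj xp (xp + ((tk - tp) / (tm - tp)) • (xm - xp))]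
end
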